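/- Let Ω = ⋃_{0<x≤1/2} B(x, x/√2) ∪ ⋃_{1/2<x<1} B(x, (1−x)/√2) ⊂ ℂ. For every function f holomorphic on Ω, ∑_{n=0}^∞ (2^n/(2n+1)!) ∫_0^{1/2} x^{2n+1} (|f^{(n)}(x)|² + |f^{(n)}(1−x)|²) dx ≤ 2 ∫_Ω |f(z)|² dA(z), where f^{(n)} denotes the n-th complex derivative of f. In particular, for f holomorphic on the open square D = {z ∈ ℂ : 0 < Re z < 1 and |Im z| < min(Re z, 1 − Re z)}, which contains Ω, the left-hand side is at most 2 ∫_D |f(z)|² dA(z). -/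

import Mathlib

open MeasureTheory Set Metric
open scoped ENNReal NNReal

/-- The domain `Ω = ⋃_{0<x≤1/2} B(x, x/√2) ∪ ⋃_{1/2<x<1} B(x, (1-x)/√2)`. -/
def Omega : Set ℂ :=
  (⋃ x ∈ Ioc (0 : ℝ) (1 / 2), ball (x : ℂ) (x / Real.sqrt 2)) ∪
    ⋃ x ∈ Ioo (1 / 2 : ℝ) 1, ball (x : ℂ) ((1 - x) / Real.sqrt 2)

/-- The open square `D` with vertices `0`, `1/2 + i/2`, `1`, `1/2 - i/2`. -/
def SquareD : Set ℂ := {z : ℂ | 0 < z.re ∧ z.re < 1 ∧ |z.im| < min z.re (1 - z.re)}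

/-!
Parseval on circles turns a radial weight `w` into the estimate
`∑ (∫ 2π r²ⁿ⁺¹ w(r) dr) / n!² · |f⁽ⁿ⁾(c)|² ≤ ∫ w(|z - c|) |f(z)|² dA(z)` on a disk centred at `c`.
On `B(x, x/√2)` take `w(r) = 1 / (π √(x² - 2r²))`. By the substitution `√2 r = x sin t`, its
`n`-th coefficient is the Wallis-type moment `2ⁿ x²ⁿ⁺¹ / (2n+1)!`. On the other hand, for fixed `z`
the quantity `x² - 2|z - x|²` is a quadratic polynomial in `x` with leading coefficient `-1`, so the
weight at `z` is, as a function of `x`, an arcsine density of mass at most `1`. Integrating over `x`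
and exchanging the integrals bounds the sum attached to one cone of disks by `∫ |f|² dA`. The two
cones, with apexes `0` and `1`, both lie in `Ω`, whence the factor `2`.

Nothing is special about the aperture: for disks `B(x, x/√κ)` with `κ > 1` the same argument gives
the coefficients `coneCoeff κ n`.
-/

open scoped Nat Real

theorem setLIntegral_inv_sqrt_sq_sub_sq_mul {R a b : ℝ} (hR : 0 < R) (hab : a ≤ b)
    (ha : -(π / 2) ≤ a) (hb : b ≤ π / 2) (g : ℝ → ℝ≥0∞) :
    ∫⁻ r in Ioo (R * Real.sin a) (R * Real.sin b), ENNReal.ofReal (√(R ^ 2 - r ^ 2))⁻¹ * g r =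
      ∫⁻ t in Ioo a b, g (R * Real.sin t) := by
  have hmono : StrictMonoOn (fun t ↦ R * Real.sin t) (Icc a b) := fun s hs t ht hst ↦
    mul_lt_mul_of_pos_left
      (Real.strictMonoOn_sin (Icc_subset_Icc ha hb hs) (Icc_subset_Icc ha hb ht) hst) hR
  rw [← ContinuousOn.image_Ioo_of_strictMonoOn hab (f := fun t ↦ R * Real.sin t) (by fun_prop)
      hmono,
    lintegral_image_eq_lintegral_deriv_mul_of_monotoneOn (f' := fun t ↦ R * Real.cos t)
      measurableSet_Ioo (fun t _ ↦ ((Real.hasDerivAt_sin t).const_mul R).hasDerivWithinAt)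
      (hmono.monotoneOn.mono Ioo_subset_Icc_self)]
  refine setLIntegral_congr_fun measurableSet_Ioo fun t ht ↦ ?_
  have hpos : 0 < R * Real.cos t :=
    mul_pos hR (Real.cos_pos_of_mem_Ioo ⟨ha.trans_lt ht.1, ht.2.trans_le hb⟩)
  have hsqrt : √(R ^ 2 - (R * Real.sin t) ^ 2) = R * Real.cos t := by
    rw [mul_pow, ← mul_one_sub, ← Real.cos_sq', ← mul_pow, Real.sqrt_sq hpos.le]
  rw [hsqrt, ← mul_assoc, ← ENNReal.ofReal_mul hpos.le, mul_inv_cancel₀ hpos.ne',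
    ENNReal.ofReal_one, one_mul]

theorem lintegral_inv_sqrt_sub_sq_le (q : ℝ) :
    ∫⁻ x : ℝ, ENNReal.ofReal (√(q - x ^ 2))⁻¹ ≤ ENNReal.ofReal π := by
  have hsupp : (fun x : ℝ ↦ ENNReal.ofReal (√(q - x ^ 2))⁻¹).support ⊆ Ioo (-√q) √q := by
    intro x hx
    by_contra hx'
    refine hx ?_
    have hqx : q - x ^ 2 ≤ 0 := by
      rw [mem_Ioo, ← abs_lt, ← Real.sqrt_sq_eq_abs, not_lt,
        Real.sqrt_le_sqrt_iff (sq_nonneg x)] at hx'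
      linarith
    simp [Real.sqrt_eq_zero_of_nonpos hqx]
  rw [← setLIntegral_eq_of_support_subset hsupp]
  rcases le_or_gt q 0 with hq | hq
  · simp [Real.sqrt_eq_zero_of_nonpos hq]
  have h := setLIntegral_inv_sqrt_sq_sub_sq_mul (Real.sqrt_pos.2 hq)
    (by linarith [Real.pi_pos] : -(π / 2) ≤ π / 2) le_rfl le_rfl 1
  simp only [Real.sin_neg, Real.sin_pi_div_two, mul_neg, mul_one, Real.sq_sqrt hq.le, Pi.one_apply,
    setLIntegral_one, Real.volume_Ioo, sub_neg_eq_add, add_halves] at h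
  exact h.le

theorem integral_sin_pow_odd_pi_div_two (n : ℕ) :
    ∫ t in (0 : ℝ)..π / 2, Real.sin t ^ (2 * n + 1) = 4 ^ n * (n ! : ℝ) ^ 2 / (2 * n + 1)! := by
  induction n with
  | zero => simp
  | succ n ih =>
    rw [show 2 * (n + 1) + 1 = 2 * n + 1 + 2 by ring, integral_sin_pow, ih,
      Nat.factorial_succ (2 * n + 1 + 1), Nat.factorial_succ (2 * n + 1), Nat.factorial_succ n]
    simp only [Real.cos_pi_div_two, Real.sin_zero]
    push_cast
    field_simp
    ring

theorem setLIntegral_sin_pow_odd (n : ℕ) :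
    ∫⁻ t in Ioo 0 (π / 2), ENNReal.ofReal (Real.sin t ^ (2 * n + 1)) =
      ENNReal.ofReal (4 ^ n * (n ! : ℝ) ^ 2 / (2 * n + 1)!) := by
  rw [← integral_sin_pow_odd_pi_div_two, intervalIntegral.integral_of_le (by positivity),
    restrict_Ioo_eq_restrict_Ioc, ofReal_integral_eq_lintegral_ofReal]
  · exact (Continuous.intervalIntegrable (by fun_prop) _ _).1
  · filter_upwards [ae_restrict_mem measurableSet_Ioc] with t ht
    exact pow_nonneg
      (Real.sin_nonneg_of_nonneg_of_le_pi ht.1.le (by linarith [ht.2, Real.pi_pos])) _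

theorem setLIntegral_inv_sqrt_mul_pow_odd {R : ℝ} (hR : 0 < R) (n : ℕ) :
    ∫⁻ r in Ioo 0 R, ENNReal.ofReal (√(R ^ 2 - r ^ 2))⁻¹ * ENNReal.ofReal (r ^ (2 * n + 1)) =
      ENNReal.ofReal (R ^ (2 * n + 1) * (4 ^ n * (n ! : ℝ) ^ 2 / (2 * n + 1)!)) := by
  have h := setLIntegral_inv_sqrt_sq_sub_sq_mul hR Real.pi_div_two_pos.le
    (by linarith [Real.pi_pos]) le_rfl fun r ↦ ENNReal.ofReal (r ^ (2 * n + 1))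
  have hR' : 0 ≤ R ^ (2 * n + 1) := by positivity
  simp only [Real.sin_zero, Real.sin_pi_div_two, mul_zero, mul_one, mul_pow,
    ENNReal.ofReal_mul hR'] at h
  rw [h, lintegral_const_mul _ (by fun_prop), setLIntegral_sin_pow_odd, ENNReal.ofReal_mul hR']

theorem lintegral_eq_lintegral_circleMap {F : ℂ → ℝ≥0∞} (hF : Measurable F) (c : ℂ) :
    ∫⁻ z, F z =
      ∫⁻ r in Ioi (0 : ℝ), ENNReal.ofReal r * ∫⁻ t in Ioo 0 (2 * π), F (circleMap c r t) := by
  -- Reflecting in `c` turns the angles `(-π, π)` of `polarCoord` into the range `(0, 2π)`.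
  have hshift (r s : ℝ) :
      c - Complex.polarCoord.symm (r, s) = circleMap c r (s + π) := by
    simp only [circleMap, Complex.polarCoord_symm_apply, Complex.ofReal_cos, Complex.ofReal_sin,
      Complex.ofReal_add, add_mul, Complex.exp_add, Complex.exp_mul_I, Complex.cos_pi,
      Complex.sin_pi]
    ring
  have hmeas : Measurable fun p : ℝ × ℝ ↦ F (circleMap c p.1 (p.2 + π)) :=
    hF.comp (by unfold circleMap; fun_prop)
  have htranslate (G : ℝ → ℝ≥0∞) :
      ∫⁻ s in Ioo (-π) π, G (s + π) = ∫⁻ t in Ioo 0 (2 * π), G t := by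
    have h := (measurePreserving_add_right volume π).setLIntegral_comp_preimage_emb
      (measurableEmbedding_addRight π) G (Ioo 0 (2 * π))
    rwa [preimage_add_const_Ioo, zero_sub, show 2 * π - π = π by ring] at h
  calc ∫⁻ z, F z
      = ∫⁻ p in Ioi (0 : ℝ) ×ˢ Ioo (-π) π,
          ENNReal.ofReal p.1 * F (circleMap c p.1 (p.2 + π)) := by
        rw [← lintegral_sub_left_eq_self F c, ← Complex.lintegral_comp_polarCoord_symm]
        simp only [← hshift, smul_eq_mul]
        rfl
    _ = ∫⁻ r in Ioi (0 : ℝ), ENNReal.ofReal r *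
          ∫⁻ s in Ioo (-π) π, F (circleMap c r (s + π)) := by
        rw [Measure.volume_eq_prod, ← Measure.prod_restrict, lintegral_prod _ (by fun_prop)]
        exact lintegral_congr fun r ↦ lintegral_const_mul (ENNReal.ofReal r)
          (f := fun s ↦ F (circleMap c r (s + π))) (hmeas.comp measurable_prodMk_left)
    _ = _ := lintegral_congr fun r ↦ by rw [htranslate fun t ↦ F (circleMap c r t)]

theorem setLIntegral_ball_eq_lintegral_circleMap {F : ℂ → ℝ≥0∞} {c : ℂ} {R : ℝ}
    (hF : Measurable ((ball c R).indicator F)) :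
    ∫⁻ z in ball c R, F z =
      ∫⁻ r in Ioo 0 R, ENNReal.ofReal r * ∫⁻ t in Ioo 0 (2 * π), F (circleMap c r t) := by
  rw [← lintegral_indicator measurableSet_ball, lintegral_eq_lintegral_circleMap hF c,
    ← Iio_inter_Ioi (a := R), ← setLIntegral_indicator measurableSet_Iio]
  refine setLIntegral_congr_fun measurableSet_Ioi fun r (hr : 0 < r) ↦ ?_
  have hmem (t : ℝ) : circleMap c r t ∈ ball c R ↔ r < R := by
    simp [dist_eq_norm, abs_of_pos hr]
  by_cases hrR : r < R <;> simp [indicator, hmem, hrR]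

theorem fourierCoeffOn_comp_circleMap {E : Type*} [NormedAddCommGroup E] [NormedSpace ℂ E]
    [CompleteSpace E] {f : ℂ → E} {c : ℂ} {r : ℝ} (hr : 0 < r)
    (hf : DiffContOnCl ℂ f (ball c r)) (n : ℕ) :
    fourierCoeffOn Real.two_pi_pos (fun t ↦ f (circleMap c r t)) n =
      ((r : ℂ) ^ n / n !) • iteratedDeriv n f c := by
  have hr' : (r : ℂ) ≠ 0 := by exact_mod_cast hr.ne'
  have hπ : (π : ℂ) ≠ 0 := by exact_mod_cast Real.pi_ne_zero
  have hexp (t : ℝ) : fourier (-n : ℤ) (t : AddCircle (2 * π - 0)) =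
      (Complex.exp (t * Complex.I) ^ n)⁻¹ := by
    rw [fourier_coe_apply, ← Complex.exp_nat_mul, ← Complex.exp_neg]
    congr 1
    push_cast
    field_simp
    ring
  have hkernel (t : ℝ) : fourier (-n : ℤ) (t : AddCircle (2 * π - 0)) • f (circleMap c r t) =
      ((r : ℂ) ^ n / Complex.I) • (deriv (circleMap c r) t •
        (1 / (circleMap c r t - c) ^ (n + 1)) • f (circleMap c r t)) := by
    have := Complex.exp_ne_zero (t * Complex.I)
    rw [hexp, deriv_circleMap, circleMap_sub_center, smul_smul, smul_smul, circleMap_zero]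
    congr 1
    field_simp
    ring
  have hcauchy := hf.circleIntegral_one_div_sub_center_pow_smul hr n
  rw [circleIntegral] at hcauchy
  rw [fourierCoeffOn_eq_integral]
  simp only [hkernel]
  rw [intervalIntegral.integral_smul, hcauchy, smul_smul, ← Complex.coe_smul, smul_smul]
  congr 1
  push_cast
  field_simp
  ring

theorem tsum_sq_enorm_iteratedDeriv_le_lintegral_circleMap {f : ℂ → ℂ} {c : ℂ} {r : ℝ}
    (hr : 0 < r) (hf : DiffContOnCl ℂ f (ball c r)) :
    ∑' n : ℕ, ENNReal.ofReal (2 * π * r ^ (2 * n) / (n ! : ℝ) ^ 2) * ‖iteratedDeriv n f c‖ₑ ^ 2 ≤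
      ∫⁻ t in Ioo 0 (2 * π), ‖f (circleMap c r t)‖ₑ ^ 2 := by
  have hcont : Continuous fun t ↦ f (circleMap c r t) :=
    hf.continuousOn_ball.comp_continuous (continuous_circleMap c r)
      (circleMap_mem_closedBall c hr.le)
  have hint : IntegrableOn (fun t ↦ ‖f (circleMap c r t)‖ ^ 2) (Ioc 0 (2 * π)) :=
    ((hcont.norm.pow 2).intervalIntegrable 0 (2 * π)).1
  set a : ℤ → ℂ := fourierCoeffOn Real.two_pi_pos fun t ↦ f (circleMap c r t)
  have hparseval : HasSum (fun k ↦ 2 * π * ‖a k‖ ^ 2)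
      (∫ t in Ioc 0 (2 * π), ‖f (circleMap c r t)‖ ^ 2) := by
    have h := (hasSum_sq_fourierCoeffOn Real.two_pi_pos
      ((memLp_two_iff_integrable_sq_norm hcont.aestronglyMeasurable).2 hint)).mul_left (2 * π)
    rwa [sub_zero, smul_eq_mul, mul_inv_cancel_left₀ Real.two_pi_pos.ne',
      intervalIntegral.integral_of_le Real.two_pi_pos.le] at h
  calc ∑' n : ℕ, ENNReal.ofReal (2 * π * r ^ (2 * n) / (n ! : ℝ) ^ 2) * ‖iteratedDeriv n f c‖ₑ ^ 2
      = ∑' n : ℕ, ENNReal.ofReal (2 * π * ‖a n‖ ^ 2) := by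
        refine tsum_congr fun n ↦ ?_
        rw [← ofReal_norm, ← ENNReal.ofReal_pow (norm_nonneg _),
          ← ENNReal.ofReal_mul (by positivity)]
        simp only [a, fourierCoeffOn_comp_circleMap hr hf n, norm_smul, norm_div, norm_pow,
          Complex.norm_real, Complex.norm_natCast, Real.norm_of_nonneg hr.le]
        congr 1
        ring
    _ ≤ ∑' k : ℤ, ENNReal.ofReal (2 * π * ‖a k‖ ^ 2) :=
        ENNReal.tsum_comp_le_tsum_of_injective Nat.cast_injective _
    _ = ∫⁻ t in Ioo 0 (2 * π), ‖f (circleMap c r t)‖ₑ ^ 2 := by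
        rw [← ENNReal.ofReal_tsum_of_nonneg (fun k ↦ by positivity) hparseval.summable,
          hparseval.tsum_eq, ofReal_integral_eq_lintegral_ofReal hint
            (Filter.Eventually.of_forall fun t ↦ by positivity), restrict_Ioo_eq_restrict_Ioc]
        simp only [ENNReal.ofReal_pow (norm_nonneg _), ofReal_norm]

theorem measurable_indicator_of_continuousOn {X Y : Type*} [TopologicalSpace X]
    [MeasurableSpace X] [OpensMeasurableSpace X] [TopologicalSpace Y] [MeasurableSpace Y]
    [BorelSpace Y] [Zero Y] {s : Set X} {f : X → Y} (hs : MeasurableSet s)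
    (hf : ContinuousOn f s) : Measurable (s.indicator f) := by
  classical
  rw [← piecewise_eq_indicator]
  exact hf.measurable_piecewise continuousOn_const hs

theorem setLIntegral_ball_radial_mul {w : ℝ → ℝ≥0∞} (hw : Measurable w) {g : ℂ → ℝ≥0∞} {c : ℂ}
    {R : ℝ} (hg : ContinuousOn g (ball c R)) :
    ∫⁻ z in ball c R, w ‖z - c‖ * g z =
      ∫⁻ r in Ioo 0 R, ENNReal.ofReal r *
        (w r * ∫⁻ t in Ioo 0 (2 * π), g (circleMap c r t)) := by
  have hmeas : Measurable ((ball c R).indicator fun z ↦ w ‖z - c‖ * g z) := by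
    convert (hw.comp (measurable_norm.comp (measurable_sub_const c))).mul
      (measurable_indicator_of_continuousOn measurableSet_ball hg) using 1
    ext z
    by_cases hz : z ∈ ball c R <;> simp [hz]
  rw [setLIntegral_ball_eq_lintegral_circleMap hmeas]
  refine setLIntegral_congr_fun measurableSet_Ioo fun r hr ↦ ?_
  have hcont : Continuous fun t ↦ g (circleMap c r t) :=
    (hg.mono (closedBall_subset_ball hr.2)).comp_continuous (continuous_circleMap c r)
      (circleMap_mem_closedBall c hr.1.le)
  simp only [circleMap_sub_center, norm_circleMap_zero, abs_of_pos hr.1]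
  rw [lintegral_const_mul _ hcont.measurable]

theorem tsum_lintegral_mul_sq_enorm_iteratedDeriv_le {f : ℂ → ℂ} {c : ℂ} {R : ℝ}
    (hf : DifferentiableOn ℂ f (ball c R)) {w : ℝ → ℝ≥0∞} (hw : Measurable w) :
    ∑' n : ℕ, (∫⁻ r in Ioo 0 R, ENNReal.ofReal (2 * π * r ^ (2 * n + 1) / (n ! : ℝ) ^ 2) * w r) *
        ‖iteratedDeriv n f c‖ₑ ^ 2 ≤
      ∫⁻ z in ball c R, w ‖z - c‖ * ‖f z‖ₑ ^ 2 := by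
  have hnorm : ContinuousOn (fun z ↦ ‖f z‖ₑ ^ 2) (ball c R) :=
    (ENNReal.continuous_pow 2).comp_continuousOn hf.continuousOn.enorm
  have hfactor {r : ℝ} (hr : 0 < r) (n : ℕ) (d : ℝ≥0∞) :
      ENNReal.ofReal (2 * π * r ^ (2 * n + 1) / (n ! : ℝ) ^ 2) * w r * d =
        ENNReal.ofReal r * (w r * (ENNReal.ofReal (2 * π * r ^ (2 * n) / (n ! : ℝ) ^ 2) * d)) := by
    rw [pow_succ', mul_left_comm, mul_div_assoc, ENNReal.ofReal_mul hr.le]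
    ring
  calc ∑' n : ℕ, (∫⁻ r in Ioo 0 R,
          ENNReal.ofReal (2 * π * r ^ (2 * n + 1) / (n ! : ℝ) ^ 2) * w r) *
        ‖iteratedDeriv n f c‖ₑ ^ 2
      = ∫⁻ r in Ioo 0 R, ∑' n : ℕ,
          ENNReal.ofReal (2 * π * r ^ (2 * n + 1) / (n ! : ℝ) ^ 2) * w r *
            ‖iteratedDeriv n f c‖ₑ ^ 2 := by
        rw [lintegral_tsum fun n ↦ by fun_prop]
        exact tsum_congr fun n ↦ (lintegral_mul_const _ (by fun_prop)).symm
    _ = ∫⁻ r in Ioo 0 R, ENNReal.ofReal r * (w r * ∑' n : ℕ,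
          ENNReal.ofReal (2 * π * r ^ (2 * n) / (n ! : ℝ) ^ 2) * ‖iteratedDeriv n f c‖ₑ ^ 2) := by
        refine setLIntegral_congr_fun measurableSet_Ioo fun r hr ↦ ?_
        simp only [hfactor hr.1, ENNReal.tsum_mul_left]
    _ ≤ ∫⁻ r in Ioo 0 R, ENNReal.ofReal r *
          (w r * ∫⁻ t in Ioo 0 (2 * π), ‖f (circleMap c r t)‖ₑ ^ 2) := by
        refine setLIntegral_mono' measurableSet_Ioo fun r hr ↦ ?_
        gcongr
        have hclosure : closure (ball c r) ⊆ ball c R :=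
          closure_ball_subset_closedBall.trans (closedBall_subset_ball hr.2)
        exact tsum_sq_enorm_iteratedDeriv_le_lintegral_circleMap hr.1
          (hf.mono hclosure).diffContOnCl
    _ = ∫⁻ z in ball c R, w ‖z - c‖ * ‖f z‖ₑ ^ 2 := (setLIntegral_ball_radial_mul hw hnorm).symm

/-- The radial weight on the disk of radius `x / √κ`, at distance `d` from its centre; the factor
`√(κ - 1) / π` makes it a subprobability density in `x` for disks centred at `x` along a line. It
vanishes for `d ≥ x / √κ`, where the square root and then the quotient take the value `0`. -/
noncomputable def coneKernel (κ x d : ℝ) : ℝ := √(κ - 1) / (π * √(x ^ 2 - κ * d ^ 2))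

/-- The weight of `x ^ (2 * n + 1) * ‖f⁽ⁿ⁾‖ ^ 2` in the inequality for the cone swept out by the
disks of centre `x` and radius `x / √κ`. -/
noncomputable def coneCoeff (κ : ℝ) (n : ℕ) : ℝ :=
  2 * √(κ - 1) / κ * ((4 / κ) ^ n / (2 * n + 1)!)

theorem coneCoeff_two (n : ℕ) : coneCoeff 2 n = 2 ^ n / (2 * n + 1)! := by
  norm_num [coneCoeff]

theorem measurable_coneKernel (κ x : ℝ) : Measurable (coneKernel κ x) := by
  unfold coneKernel
  fun_prop

theorem setLIntegral_mul_coneKernel {κ x : ℝ} (hκ : 0 < κ) (hx : 0 < x) (n : ℕ) :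
    ∫⁻ r in Ioo 0 (x / √κ), ENNReal.ofReal (2 * π * r ^ (2 * n + 1) / (n ! : ℝ) ^ 2) *
        ENNReal.ofReal (coneKernel κ x r) =
      ENNReal.ofReal (coneCoeff κ n * x ^ (2 * n + 1)) := by
  set R := x / √κ with hR_def
  have hR : 0 < R := by positivity
  have hkernel (r : ℝ) : coneKernel κ x r = √(κ - 1) / (π * √κ) * (√(R ^ 2 - r ^ 2))⁻¹ := by
    have hx' : x ^ 2 - κ * r ^ 2 = κ * (R ^ 2 - r ^ 2) := by
      rw [hR_def, div_pow, Real.sq_sqrt hκ.le]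
      field_simp
    rw [coneKernel, hx', Real.sqrt_mul hκ.le, ← mul_assoc, div_mul_eq_div_div, div_eq_mul_inv]
  have hsplit : ∀ r ∈ Ioo 0 R, ENNReal.ofReal (2 * π * r ^ (2 * n + 1) / (n ! : ℝ) ^ 2) *
      ENNReal.ofReal (coneKernel κ x r) = ENNReal.ofReal (2 * √(κ - 1) / (√κ * (n ! : ℝ) ^ 2)) *
        (ENNReal.ofReal (√(R ^ 2 - r ^ 2))⁻¹ * ENNReal.ofReal (r ^ (2 * n + 1))) := by
    intro r hr
    have := hr.1
    rw [hkernel, ← ENNReal.ofReal_mul (by positivity), ← ENNReal.ofReal_mul (by positivity),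
      ← ENNReal.ofReal_mul (by positivity)]
    congr 1
    field_simp
  rw [setLIntegral_congr_fun measurableSet_Ioo hsplit, lintegral_const_mul _ (by fun_prop),
    setLIntegral_inv_sqrt_mul_pow_odd hR, ← ENNReal.ofReal_mul (by positivity)]
  congr 1
  have hκpow : √κ ^ (2 * n) = κ ^ n := by rw [pow_mul, Real.sq_sqrt hκ.le]
  rw [coneCoeff, hR_def, div_pow x, pow_succ (√κ), hκpow, div_pow 4]
  field_simp
  rw [Real.sq_sqrt hκ.le, mul_comm]

theorem lintegral_coneKernel_norm_sub_smul_le_one {V : Type*} [NormedAddCommGroup V]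
    [InnerProductSpace ℝ V] {κ : ℝ} (hκ : 1 < κ) {u : V} (hu : ‖u‖ = 1) (v : V) :
    ∫⁻ x : ℝ, ENNReal.ofReal (coneKernel κ x ‖v - x • u‖) ≤ 1 := by
  have hκ' : 0 < κ - 1 := sub_pos.2 hκ
  -- Completing the square in `x` exhibits an arcsine density centred at `m`.
  set m := κ * inner ℝ v u / (κ - 1) with hm
  set q := m ^ 2 - κ * ‖v‖ ^ 2 / (κ - 1) with hq
  have hkernel (x : ℝ) : coneKernel κ x ‖v - x • u‖ = π⁻¹ * (√(q - (x - m) ^ 2))⁻¹ := by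
    have hsq : x ^ 2 - κ * ‖v - x • u‖ ^ 2 = (κ - 1) * (q - (x - m) ^ 2) := by
      rw [norm_sub_sq_real, inner_smul_right, norm_smul, hu, mul_one, Real.norm_eq_abs, sq_abs, hq,
        hm]
      field_simp
      ring
    rw [coneKernel, hsq, Real.sqrt_mul hκ'.le]
    have := (Real.sqrt_pos.2 hκ').ne'
    field_simp
  have hπ : (0 : ℝ) ≤ π⁻¹ := by positivity
  simp only [hkernel, ENNReal.ofReal_mul hπ]
  rw [lintegral_const_mul _ (by fun_prop),
    lintegral_sub_right_eq_self (fun x ↦ ENNReal.ofReal (√(q - x ^ 2))⁻¹) m]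
  calc ENNReal.ofReal π⁻¹ * ∫⁻ x : ℝ, ENNReal.ofReal (√(q - x ^ 2))⁻¹
      ≤ ENNReal.ofReal π⁻¹ * ENNReal.ofReal π := by gcongr; exact lintegral_inv_sqrt_sub_sq_le q
    _ = 1 := by rw [← ENNReal.ofReal_mul hπ, inv_mul_cancel₀ Real.pi_ne_zero, ENNReal.ofReal_one]

theorem tsum_coneCoeff_mul_sq_enorm_iteratedDeriv_le {κ x : ℝ} (hκ : 0 < κ) (hx : 0 < x)
    {f : ℂ → ℂ} {c : ℂ} (hf : DifferentiableOn ℂ f (ball c (x / √κ))) :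
    ∑' n : ℕ, ENNReal.ofReal (coneCoeff κ n) *
        (ENNReal.ofReal (x ^ (2 * n + 1)) * ‖iteratedDeriv n f c‖ₑ ^ 2) ≤
      ∫⁻ z in ball c (x / √κ), ENNReal.ofReal (coneKernel κ x ‖z - c‖) * ‖f z‖ₑ ^ 2 := by
  have h := tsum_lintegral_mul_sq_enorm_iteratedDeriv_le hf
    (measurable_coneKernel κ x).ennreal_ofReal
  simp only [setLIntegral_mul_coneKernel hκ hx] at h
  have hx' (n : ℕ) : 0 ≤ x ^ (2 * n + 1) := by positivity
  simpa only [ENNReal.ofReal_mul' (hx' _), mul_assoc] using h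

theorem aemeasurable_iteratedDeriv_comp {X : Type*} [TopologicalSpace X] [MeasurableSpace X]
    [OpensMeasurableSpace X] {μ : Measure X} {U : Set ℂ} (hU : IsOpen U) {f : ℂ → ℂ}
    (hf : DifferentiableOn ℂ f U) {S : Set X} (hS : MeasurableSet S) {γ : X → ℂ}
    (hγ : ContinuousOn γ S) (hγU : MapsTo γ S U) (n : ℕ) :
    AEMeasurable (fun x ↦ iteratedDeriv n f (γ x)) (μ.restrict S) := by
  have hderiv : ContinuousOn (iteratedDeriv n f) U := by
    rw [iteratedDeriv_eq_iterate]
    exact ((hf.analyticOnNhd hU).iterated_deriv n).continuousOn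
  exact (hderiv.comp hγ hγU).aemeasurable hS

theorem lintegral_lintegral_mul_le_of_lintegral_le_one {α β : Type*} [MeasurableSpace α]
    [MeasurableSpace β] {μ : Measure α} {ν : Measure β} [SFinite μ] [SFinite ν]
    {k : α → β → ℝ≥0∞} (hk : Measurable (Function.uncurry k)) (hk_le : ∀ b, ∫⁻ a, k a b ∂μ ≤ 1)
    {g : β → ℝ≥0∞} (hg : AEMeasurable g ν) :
    ∫⁻ a, ∫⁻ b, k a b * g b ∂ν ∂μ ≤ ∫⁻ b, g b ∂ν := by
  have hkg : AEMeasurable (Function.uncurry fun a b ↦ k a b * g b) (μ.prod ν) :=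
    hk.aemeasurable.mul hg.comp_snd
  rw [lintegral_lintegral_swap hkg]
  refine lintegral_mono fun b ↦ ?_
  have hkb : Measurable fun a ↦ k a b := hk.comp measurable_prodMk_right
  rw [lintegral_mul_const _ hkb]
  exact mul_le_of_le_one_left' (hk_le b)

theorem tsum_coneCoeff_mul_lintegral_le {κ : ℝ} (hκ : 1 < κ) {S : Set ℝ} (hS : MeasurableSet S)
    (hS₀ : S ⊆ Ioi 0) {p u : ℂ} (hu : ‖u‖ = 1) {U : Set ℂ} (hU : IsOpen U)
    (hSU : ∀ x ∈ S, ball (p + x • u) (x / √κ) ⊆ U) {f : ℂ → ℂ} (hf : DifferentiableOn ℂ f U) :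
    ∑' n : ℕ, ENNReal.ofReal (coneCoeff κ n) *
        ∫⁻ x in S, ENNReal.ofReal (x ^ (2 * n + 1)) * ‖iteratedDeriv n f (p + x • u)‖ₑ ^ 2 ≤
      ∫⁻ z in U, ‖f z‖ₑ ^ 2 := by
  have hκ₀ : 0 < κ := one_pos.trans hκ
  have haxis : MapsTo (fun x : ℝ ↦ p + x • u) S U := fun x hx ↦
    hSU x hx (mem_ball_self (div_pos (hS₀ hx) (Real.sqrt_pos.2 hκ₀)))
  have hmeas (n : ℕ) : AEMeasurable (fun x : ℝ ↦
      ENNReal.ofReal (x ^ (2 * n + 1)) * ‖iteratedDeriv n f (p + x • u)‖ₑ ^ 2)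
      (volume.restrict S) :=
    AEMeasurable.mul (by fun_prop)
      ((aemeasurable_iteratedDeriv_comp hU hf hS (by fun_prop) haxis n).enorm.pow_const 2)
  have hker_meas : Measurable (Function.uncurry fun (x : ℝ) (z : ℂ) ↦
      ENNReal.ofReal (coneKernel κ x ‖z - (p + x • u)‖)) := by
    unfold coneKernel Function.uncurry
    fun_prop
  have hker_le (z : ℂ) : ∫⁻ x in S, ENNReal.ofReal (coneKernel κ x ‖z - (p + x • u)‖) ≤ 1 := by
    simp only [← sub_sub]
    exact (setLIntegral_le_lintegral _ _).trans
      (lintegral_coneKernel_norm_sub_smul_le_one hκ hu (z - p))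
  calc ∑' n : ℕ, ENNReal.ofReal (coneCoeff κ n) *
        ∫⁻ x in S, ENNReal.ofReal (x ^ (2 * n + 1)) * ‖iteratedDeriv n f (p + x • u)‖ₑ ^ 2
      = ∫⁻ x in S, ∑' n : ℕ, ENNReal.ofReal (coneCoeff κ n) *
          (ENNReal.ofReal (x ^ (2 * n + 1)) * ‖iteratedDeriv n f (p + x • u)‖ₑ ^ 2) := by
        rw [lintegral_tsum fun n ↦ (hmeas n).const_mul _]
        exact tsum_congr fun n ↦ (lintegral_const_mul'' _ (hmeas n)).symm
    _ ≤ ∫⁻ x in S, ∫⁻ z in U,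
          ENNReal.ofReal (coneKernel κ x ‖z - (p + x • u)‖) * ‖f z‖ₑ ^ 2 :=
        setLIntegral_mono' hS fun x hx ↦
          (tsum_coneCoeff_mul_sq_enorm_iteratedDeriv_le hκ₀ (hS₀ hx) (hf.mono (hSU x hx))).trans
            (lintegral_mono_set (hSU x hx))
    _ ≤ ∫⁻ z in U, ‖f z‖ₑ ^ 2 :=
        lintegral_lintegral_mul_le_of_lintegral_le_one hker_meas hker_le
          ((hf.continuousOn.aemeasurable hU.measurableSet).enorm.pow_const 2)

theorem isOpen_Omega : IsOpen Omega :=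
  (isOpen_biUnion fun _ _ ↦ isOpen_ball).union (isOpen_biUnion fun _ _ ↦ isOpen_ball)

theorem ball_subset_Omega {x : ℝ} (hx : x ∈ Ioo 0 (1 / 2)) : ball (x : ℂ) (x / √2) ⊆ Omega :=
  subset_union_of_subset_left (subset_biUnion_of_mem (u := fun x : ℝ ↦ ball (x : ℂ) (x / √2))
    (Ioo_subset_Ioc_self hx)) _

theorem ball_one_sub_subset_Omega {x : ℝ} (hx : x ∈ Ioo 0 (1 / 2)) :
    ball (1 - x : ℂ) (x / √2) ⊆ Omega := by
  have hmem : 1 - x ∈ Ioo (1 / 2) 1 := ⟨by linarith [hx.2], by linarith [hx.1]⟩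
  have h := subset_biUnion_of_mem (u := fun y : ℝ ↦ ball (y : ℂ) ((1 - y) / √2)) hmem
  simp only [sub_sub_cancel, Complex.ofReal_sub, Complex.ofReal_one] at h
  exact subset_union_of_subset_right h _

theorem abs_re_add_abs_im_le_sqrt_two_mul_norm (z : ℂ) : |z.re| + |z.im| ≤ √2 * ‖z‖ := by
  rw [Complex.norm_eq_sqrt_sq_add_sq, ← Real.sqrt_mul zero_le_two]
  refine Real.le_sqrt_of_sq_le ?_
  simpa only [sq_abs] using add_sq_le (a := |z.re|) (b := |z.im|)

theorem abs_re_sub_add_abs_im_lt {x r : ℝ} {z : ℂ} (hz : z ∈ ball (x : ℂ) (r / √2)) :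
    |z.re - x| + |z.im| < r := by
  rw [mem_ball_iff_norm, lt_div_iff₀' (by positivity)] at hz
  simpa using (abs_re_add_abs_im_le_sqrt_two_mul_norm (z - x)).trans_lt hz

theorem Omega_subset_SquareD : Omega ⊆ SquareD := by
  rintro z (hz | hz) <;> simp only [mem_iUnion, exists_prop] at hz <;>
    obtain ⟨x, ⟨hx, hx'⟩, hzx⟩ := hz <;>
    have h := abs_re_sub_add_abs_im_lt hzx <;>
    have hre := abs_le.1 (le_refl |z.re - x|) <;>
    have him := abs_nonneg z.im <;>
    exact ⟨by linarith, by linarith, lt_min (by linarith) (by linarith)⟩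

/-- The (AHS)-type sum over the diagonal `(0,1)` is bounded by twice the Bergman integral on
`Ω`, and in particular by twice the Bergman integral on the square `D ⊇ Ω`. -/
theorem ahs_upper_bound (f : ℂ → ℂ) (hf : DifferentiableOn ℂ f Omega) :
    (∑' n : ℕ, ENNReal.ofReal ((2 : ℝ) ^ n / (Nat.factorial (2 * n + 1) : ℝ)) *
        ∫⁻ x in Ioo (0 : ℝ) (1 / 2),
          ENNReal.ofReal (x ^ (2 * n + 1)) *
            ((‖iteratedDeriv n f (x : ℂ)‖₊ : ℝ≥0∞) ^ 2 +
              (‖iteratedDeriv n f (1 - (x : ℂ))‖₊ : ℝ≥0∞) ^ 2) ∂volume) ≤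
        2 * ∫⁻ z in Omega, (‖f z‖₊ : ℝ≥0∞) ^ 2 ∂volume ∧
      (2 * ∫⁻ z in Omega, (‖f z‖₊ : ℝ≥0∞) ^ 2 ∂volume) ≤
        2 * ∫⁻ z in SquareD, (‖f z‖₊ : ℝ≥0∞) ^ 2 ∂volume := by
  refine ⟨?_, by gcongr; exact Omega_subset_SquareD⟩
  simp only [← enorm_eq_nnnorm, ← coneCoeff_two]
  have hleft := tsum_coneCoeff_mul_lintegral_le (p := 0) (u := 1) one_lt_two measurableSet_Ioo
    (fun x hx ↦ hx.1) norm_one isOpen_Omega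
    (fun x hx ↦ by simpa using ball_subset_Omega hx) hf
  have hright := tsum_coneCoeff_mul_lintegral_le (p := 1) (u := -1) one_lt_two measurableSet_Ioo
    (fun x hx ↦ hx.1) (by simp) isOpen_Omega
    (fun x hx ↦ by simpa [← sub_eq_add_neg] using ball_one_sub_subset_Omega hx) hf
  simp only [zero_add, Complex.real_smul, mul_one, mul_neg, ← sub_eq_add_neg] at hleft hright
  have hmeas (n : ℕ) : AEMeasurable (fun x : ℝ ↦
      ENNReal.ofReal (x ^ (2 * n + 1)) * ‖iteratedDeriv n f x‖ₑ ^ 2)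
      (volume.restrict (Ioo 0 (1 / 2))) :=
    AEMeasurable.mul (by fun_prop) ((aemeasurable_iteratedDeriv_comp isOpen_Omega hf
      measurableSet_Ioo Complex.continuous_ofReal.continuousOn
      (fun x hx ↦ ball_subset_Omega hx (mem_ball_self (by have := hx.1; positivity)))
      n).enorm.pow_const 2)
  simp only [mul_add, lintegral_add_left' (hmeas _), ENNReal.tsum_add]
  rw [two_mul]
  exact add_le_add hleft hright
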